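/- Let ξ be the generic n×n Grassmann matrix, i.e. the matrix whose entries ξ_{i,j} are the n² anticommuting generators of the exterior algebra on an n²-dimensional space. Then ξ^{2n} = 0. (This is an interpretation of the Amitsur–Levitzki theorem: the standard identity of degree 2n holds for n×n matrices.) -/

import Mathlib

/-- The generic `n × n` Grassmann matrix: the matrix whose `(i,j)` entry is the generator
`ξ_{i,j}` of the exterior algebra on an `n²`-dimensional vector space with basis indexed by
pairs `(i,j)`. -/
noncomputable def genericGrassmannMatrix (F : Type*) [Field F] (n : ℕ) :
    Matrix (Fin n) (Fin n) (ExteriorAlgebra F ((Fin n × Fin n) → F)) :=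
  fun i j => ExteriorAlgebra.ι F (Pi.single (i, j) 1)

/-!
Rosset's argument. Entries of degree one in an exterior algebra anticommute, so the entries of `ξ²`
are central and `ξ²` is a matrix over a commutative ring. Moving one factor of `ξ` around the trace
of `ξ^(2k)` changes its sign, so all powers of `ξ²` have trace zero as soon as `2` is not a zero
divisor. In the absence of torsion, Newton's identities then force the characteristic polynomial of
`ξ²` to be `Xⁿ`, and Cayley–Hamilton gives `(ξ²)ⁿ = 0`. Every matrix of degree one elements is a
specialization of the generic one over `ℤ`, whose exterior algebra is free, hence torsion-free.
-/

open Matrix Polynomial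

section Jacobi

theorem derivation_prod {R A N σ : Type*} [CommSemiring R] [CommSemiring A] [AddCommMonoid N]
    [Algebra R A] [Module A N] [Module R N] [DecidableEq σ] (D : Derivation R A N) (s : Finset σ)
    (f : σ → A) : D (∏ i ∈ s, f i) = ∑ i ∈ s, (∏ j ∈ s.erase i, f j) • D (f i) := by
  induction s using Finset.induction_on with
  | empty => simp
  | insert a s ha ih =>
    rw [Finset.prod_insert ha, D.leibniz, ih, Finset.sum_insert ha, Finset.erase_insert ha,
      Finset.smul_sum, add_comm]
    congr 1
    refine Finset.sum_congr rfl fun i hi => ?_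
    have hai : a ≠ i := fun h => ha (h ▸ hi)
    rw [Finset.erase_insert_of_ne hai, Finset.prod_insert (by simp [ha]), mul_smul]

variable {R A m : Type*} [CommSemiring R] [CommRing A] [Algebra R A] [Fintype m] [DecidableEq m]
  (D : Derivation R A A) (M : Matrix m m A)

theorem derivation_det_eq_sum_det_updateCol :
    D M.det = ∑ i, (M.updateCol i fun k => D (M k i)).det := by
  simp only [det_apply, map_sum, Units.smul_def, map_zsmul]
  rw [Finset.sum_comm]
  refine Finset.sum_congr rfl fun σ _ => ?_
  rw [derivation_prod, Finset.smul_sum]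
  refine Finset.sum_congr rfl fun i hi => ?_
  rw [← Finset.prod_erase_mul _ _ hi, updateCol_self]
  congr 2
  refine Finset.prod_congr rfl fun j hj => ?_
  rw [updateCol_ne (Finset.ne_of_mem_erase hj)]

theorem derivation_det_eq_trace_adjugate_mul :
    D M.det = (M.adjugate * M.map D).trace := by
  rw [derivation_det_eq_sum_det_updateCol]
  refine Finset.sum_congr rfl fun i _ => ?_
  rw [← cramer_apply, cramer_eq_adjugate_mulVec]
  rfl

end Jacobi

section TracesOfPowers

variable {R m : Type*} [CommRing R] [Fintype m] [DecidableEq m] (M : Matrix m m R)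

theorem derivative_charpolyRev :
    derivative M.charpolyRev = -((1 - (X : R[X]) • M.map C).adjugate * M.map C).trace := by
  have hD : (1 - (X : R[X]) • M.map C).map (derivative' (R := R)) = -M.map C := by
    ext1 i j
    by_cases h : i = j <;> simp [derivative', one_apply, h]
  have hdet := derivation_det_eq_trace_adjugate_mul derivative' (1 - (X : R[X]) • M.map C)
  rw [hD, mul_neg, trace_neg] at hdet
  exact hdet

/-- Newton's identities, as a congruence for the logarithmic derivative of `M.charpolyRev`. -/
theorem X_pow_dvd_derivative_charpolyRev_add (k : ℕ) :
    X ^ k ∣ derivative M.charpolyRev +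
      M.charpolyRev * ∑ i ∈ Finset.range k, X ^ i * C (M ^ (i + 1)).trace := by
  set N : Matrix m m R[X] := M.map C
  set B : Matrix m m R[X] := 1 - (X : R[X]) • N
  have hN (i : ℕ) : (N ^ i).trace = C (M ^ i).trace := by
    rw [AddMonoidHom.map_trace (C : R →+* R[X]), ← RingHom.mapMatrix_apply, map_pow]
    rfl
  have hgeom : B.adjugate * (1 - ((X : R[X]) • N) ^ k) * N =
      M.charpolyRev • ∑ i ∈ Finset.range k, (X : R[X]) ^ i • N ^ (i + 1) := by
    rw [← mul_neg_geom_sum, ← mul_assoc, adjugate_mul, smul_mul_assoc, one_mul, smul_mul_assoc,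
      Finset.sum_mul]
    simp only [_root_.smul_pow, smul_mul_assoc, pow_succ]
    rfl
  have htrace := congrArg trace hgeom
  simp only [mul_sub, mul_one, sub_mul, _root_.smul_pow, mul_smul_comm, smul_mul_assoc, mul_assoc,
    ← pow_succ, trace_sub, trace_smul, trace_sum, hN, smul_eq_mul] at htrace
  rw [derivative_charpolyRev, ← htrace]
  exact ⟨-(B.adjugate * N ^ (k + 1)).trace, by ring⟩

variable [IsAddTorsionFree R] {M}

theorem charpolyRev_eq_one_of_trace_pow_eq_zero (h : ∀ k, (M ^ (k + 1)).trace = 0) :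
    M.charpolyRev = 1 := by
  have hderiv : derivative M.charpolyRev = 0 := by
    ext k
    have hdvd := X_pow_dvd_derivative_charpolyRev_add M (k + 1)
    simp only [h, map_zero, mul_zero, Finset.sum_const_zero, add_zero] at hdvd
    exact X_pow_dvd_iff.mp hdvd k k.lt_succ_self
  rw [eq_C_of_derivative_eq_zero hderiv, coeff_zero_eq_eval_zero, eval_charpolyRev, C_1]

theorem charpoly_eq_X_pow_of_trace_pow_eq_zero (h : ∀ k, (M ^ (k + 1)).trace = 0) :
    M.charpoly = X ^ Fintype.card m := by
  nontriviality R
  rw [← reflect_one, ← charpolyRev_eq_one_of_trace_pow_eq_zero h, ← reverse_charpoly, reverse,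
    charpoly_natDegree_eq_dim, reflect_reflect]

theorem pow_card_eq_zero_of_trace_pow_eq_zero (h : ∀ k, (M ^ (k + 1)).trace = 0) :
    M ^ Fintype.card m = 0 := by
  simpa [charpoly_eq_X_pow_of_trace_pow_eq_zero h] using M.aeval_self_charpoly

end TracesOfPowers

theorem trace_mul_eq_neg_trace_mul_of_anticomm {E m n : Type*} [NonUnitalNonAssocRing E] [Fintype m]
    [Fintype n] {A : Matrix m n E} {B : Matrix n m E}
    (h : ∀ i j, A i j * B j i = -(B j i * A i j)) : (A * B).trace = -(B * A).trace := by
  simp only [trace, diag, mul_apply, h, Finset.sum_neg_distrib]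
  rw [Finset.sum_comm]

section DegreeOne

open ExteriorAlgebra

variable {R M : Type*} [CommRing R] [AddCommGroup M] [Module R M]

theorem ι_mul_ι_anticomm (x y : M) : ι R x * ι R y = -(ι R y * ι R x) :=
  eq_neg_of_add_eq_zero_left (ι_add_mul_swap x y)

theorem ι_mul_ι_mem_center (x y : M) : ι R x * ι R y ∈ Subring.center (ExteriorAlgebra R M) := by
  rw [Subring.mem_center_iff]
  intro a
  induction a using ExteriorAlgebra.induction with
  | algebraMap r => exact Algebra.commutes r _
  | ι z =>
    rw [← mul_assoc, ι_mul_ι_anticomm z x, neg_mul, mul_assoc, ι_mul_ι_anticomm z y, mul_neg,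
      neg_neg, mul_assoc]
  | mul a b ha hb => rw [mul_assoc, hb, ← mul_assoc, ha, mul_assoc]
  | add a b ha hb => rw [add_mul, mul_add, ha, hb]

variable {m : Type*} [Fintype m] [DecidableEq m] (V : Matrix m m M)

theorem map_ι_sq_mem_matrix_center :
    V.map (ι R) ^ 2 ∈ (Subring.center (ExteriorAlgebra R M)).matrix := fun i j => by
  rw [sq, mul_apply]
  exact sum_mem fun k _ => ι_mul_ι_mem_center (V i k) (V k j)

theorem map_ι_pow_odd_apply_mul_ι (k : ℕ) (i j : m) (x : M) :
    (V.map (ι R) ^ (2 * k + 1)) i j * ι R x = -(ι R x * (V.map (ι R) ^ (2 * k + 1)) i j) := by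
  have hcentral : V.map (ι R) ^ (2 * k) ∈ (Subring.center (ExteriorAlgebra R M)).matrix := by
    rw [pow_mul]
    exact pow_mem (map_ι_sq_mem_matrix_center V) k
  simp only [pow_succ (V.map (ι R)), mul_apply, map_apply, Finset.sum_mul, Finset.mul_sum,
    ← Finset.sum_neg_distrib]
  refine Finset.sum_congr rfl fun l _ => ?_
  rw [mul_assoc, ι_mul_ι_anticomm, mul_neg, ← mul_assoc, ← mul_assoc,
    Subring.mem_center_iff.mp (hcentral i l)]

theorem trace_map_ι_pow_even_eq_zero [IsAddTorsionFree (ExteriorAlgebra R M)] (k : ℕ) :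
    (V.map (ι R) ^ (2 * (k + 1))).trace = 0 := by
  rw [← self_eq_neg]
  calc (V.map (ι R) ^ (2 * (k + 1))).trace
      = (V.map (ι R) ^ (2 * k + 1) * V.map (ι R)).trace := by rw [← pow_succ]; rfl
    _ = -(V.map (ι R) * V.map (ι R) ^ (2 * k + 1)).trace :=
      trace_mul_eq_neg_trace_mul_of_anticomm fun i j => map_ι_pow_odd_apply_mul_ι V k i j (V j i)
    _ = -(V.map (ι R) ^ (2 * (k + 1))).trace := by rw [← pow_succ']; rfl

theorem map_ι_pow_eq_zero_of_isAddTorsionFree [IsAddTorsionFree (ExteriorAlgebra R M)] :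
    V.map (ι R) ^ (2 * Fintype.card m) = 0 := by
  let Z := Subring.center (ExteriorAlgebra R M)
  have : IsAddTorsionFree Z :=
    Function.Injective.isAddTorsionFree Z.subtype.toAddMonoidHom Subtype.val_injective
  let P : Matrix m m Z := of fun i j => ⟨_, map_ι_sq_mem_matrix_center V i j⟩
  have hP (k : ℕ) : Z.subtype.mapMatrix (P ^ k) = V.map (ι R) ^ (2 * k) := by
    rw [map_pow, pow_mul]
    rfl
  have htrace (k : ℕ) : (P ^ (k + 1)).trace = 0 := by
    apply Subtype.val_injective
    change Z.subtype _ = 0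
    rw [AddMonoidHom.map_trace, ← RingHom.mapMatrix_apply, hP, trace_map_ι_pow_even_eq_zero]
  rw [← hP, pow_card_eq_zero_of_trace_pow_eq_zero htrace, map_zero]

variable (R M) in
theorem free_exteriorAlgebra [Module.Free R M] : Module.Free R (ExteriorAlgebra R M) := by
  classical
  let := linearOrderOfSTO (WellOrderingRel (α := Module.Free.ChooseBasisIndex R M))
  exact .of_basis (Module.Free.chooseBasis R M).ExteriorAlgebra

theorem exists_ringHom_ι_single_eq {σ : Type*} (v : σ → M) :
    ∃ φ : ExteriorAlgebra ℤ (σ →₀ ℤ) →+* ExteriorAlgebra R M,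
      ∀ s, φ (ι ℤ (Finsupp.single s 1)) = ι R (v s) := by
  let f : (σ →₀ ℤ) →ₗ[ℤ] ExteriorAlgebra R M :=
    (ι R).toAddMonoidHom.toIntLinearMap ∘ₗ Finsupp.linearCombination ℤ v
  let φ : ExteriorAlgebra ℤ (σ →₀ ℤ) →ₐ[ℤ] ExteriorAlgebra R M :=
    lift ℤ ⟨f, fun x => ι_sq_zero (Finsupp.linearCombination ℤ v x)⟩
  exact ⟨φ, fun s => (lift_ι_apply ℤ f _ _).trans (by simp [f])⟩

theorem genericGrassmannMatrix_pow_two_mul_self_eq_zero_general :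
    V.map (ι R) ^ (2 * Fintype.card m) = 0 := by
  obtain ⟨φ, hφ⟩ := exists_ringHom_ι_single_eq (R := R) fun s : m × m => V s.1 s.2
  let U : Matrix m m (m × m →₀ ℤ) := of fun i j => Finsupp.single (i, j) 1
  have hU : φ.mapMatrix (U.map (ι ℤ)) = V.map (ι R) := by
    ext1 i j
    exact hφ (i, j)
  have := free_exteriorAlgebra ℤ (m × m →₀ ℤ)
  have : IsAddTorsionFree (ExteriorAlgebra ℤ (m × m →₀ ℤ)) := .of_isTorsionFree ℤ _
  rw [← hU, ← map_pow, map_ι_pow_eq_zero_of_isAddTorsionFree U, map_zero]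

end DegreeOne

/-- The generic `n × n` Grassmann matrix `ξ` over a field of characteristic zero satisfies
`ξ^{2n} = 0` (an interpretation of the Amitsur–Levitzki theorem). -/
theorem genericGrassmannMatrix_pow_two_mul_self_eq_zero
    (F : Type*) [Field F] [CharZero F] (n : ℕ) :
    (genericGrassmannMatrix F n) ^ (2 * n) = 0 := by
  simpa using! genericGrassmannMatrix_pow_two_mul_self_eq_zero_general (R := F)
    (of fun i j : Fin n => Pi.single (i, j) 1)
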